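/- arXiv:2105.02381 — 5 statements merged into one kernel-verified Lean document; each statement's English description precedes it below -/
import Mathlib

section
/- Let (W_i, Y_i)_{i≥1} be random sequences in ℝ^q × ℝ (indexed by sample size n₁) such that, as n₁ → ∞: (1) the empirical covariance (1/n₁) Σ_i (W_i − W̄₁)(W_i − W̄₁)ᵀ converges in probability to S_X + Σ_ν with S_X + Σ_ν invertible; (2) the empirical cross-covariance (1/n₁) Σ_i (W_i − W̄₁)(Y_i − Ȳ₁) converges in probability to S_X β; (3) W̄₁ converges in probability to a fixed vector X̄₁ and Ȳ₁ converges in probability to α + X̄₁ᵀ β; and (4) W̄₀ converges in probability to a fixed vector X̄₀. Let β̂ be the OLS slope from regressing Y on W, and ψ̂_ols = Ȳ₁ + (W̄₀ − W̄₁)ᵀ β̂. Then β̂ converges in probability to κ̌ β, where κ̌ = (S_X + Σ_ν)^{-1} S_X, and ψ̂_ols converges in probability to ψ₀¹ + (X̄₀ − X̄₁)ᵀ (κ̌ − I_q) β, where ψ₀¹ = α + X̄₀ᵀ β. -/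
/-!
Convergence in probability to a constant is ordinary convergence along a filter: on `ℕ × Ω`, the
sets `s` with `P {ω | (n, ω) ∉ s} → 0` form a filter `probFilter P`, and `f n → c` in measure iff
`(n, ω) ↦ f n ω` tends to `c` along it (`tendstoInMeasure_const_iff`). No measurability is needed.
Both conclusions are then the continuous mapping theorem, i.e. composition of limits: the estimators
are continuous functions of the empirical moments at their limit, because matrix inversion is
continuous at the invertible matrix `S_X + Σ_ν`. What remains is the algebraic identity
`α + X̄₁ᵀβ + (X̄₀ - X̄₁)ᵀ κ̌ β = α + X̄₀ᵀβ + (X̄₀ - X̄₁)ᵀ (κ̌ - I) β`.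
-/

open MeasureTheory Matrix Filter
open scoped BigOperators
open scoped Topology ENNReal

/-- The filter of events of asymptotically full probability: `s ⊆ ℕ × Ω` belongs to it when the
(outer) measure of `{ω | (n, ω) ∉ s}` tends to zero as `n → ∞`. -/
def probFilter {Ω : Type*} [MeasurableSpace Ω] (P : Measure Ω) : Filter (ℕ × Ω) where
  sets := {s | Tendsto (fun n => P {ω | (n, ω) ∉ s}) atTop (𝓝 0)}
  univ_sets := by simp
  sets_of_superset := by
    intro s t hs hst
    exact tendsto_of_tendsto_of_tendsto_of_le_of_le tendsto_const_nhds hs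
      (fun _ => zero_le) (fun n => measure_mono fun ω hω h => hω (hst h))
  inter_sets := by
    intro s t hs ht
    have hadd := Tendsto.add (show Tendsto _ _ _ from hs) (show Tendsto _ _ _ from ht)
    rw [add_zero] at hadd
    refine tendsto_of_tendsto_of_tendsto_of_le_of_le tendsto_const_nhds hadd
      (fun _ => zero_le) (fun n => (measure_mono ?_).trans (measure_union_le _ _))
    intro ω hω
    by_cases h : (n, ω) ∈ s
    · exact Or.inr fun h' => hω ⟨h, h'⟩
    · exact Or.inl h

lemma tendstoInMeasure_const_iff {Ω : Type*} [MeasurableSpace Ω] (P : Measure Ω)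
    (f : ℕ → Ω → ℝ) (c : ℝ) :
    TendstoInMeasure P f atTop (fun _ => c) ↔
      Tendsto (fun p : ℕ × Ω => f p.1 p.2) (probFilter P) (𝓝 c) := by
  rw [EMetric.tendsto_nhds]
  refine forall₂_congr fun ε _ => ?_
  change _ ↔ Tendsto (fun n => P {ω | ¬ edist (f n ω) c < ε}) atTop (𝓝 0)
  simp only [not_lt]

/-- Matrix inversion is continuous at an invertible matrix, in terms of limits. -/
lemma tendsto_matrix_inv {ι : Type*} {l : Filter ι} {q : ℕ}
    {A : ι → Matrix (Fin q) (Fin q) ℝ} {B : Matrix (Fin q) (Fin q) ℝ}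
    (hA : Tendsto A l (𝓝 B)) (hB : IsUnit B.det) :
    Tendsto (fun i => (A i)⁻¹) l (𝓝 B⁻¹) := by
  simp only [Matrix.inv_def, Ring.inverse_eq_inv']
  have hdet : Tendsto (fun i => (A i).det) l (𝓝 B.det) :=
    (continuous_id.matrix_det.tendsto B).comp hA
  have hadj : Tendsto (fun i => (A i).adjugate) l (𝓝 B.adjugate) :=
    (continuous_id.matrix_adjugate.tendsto B).comp hA
  exact (hdet.inv₀ hB.ne_zero).smul hadj

lemma tendsto_matrix_mulVec {ι : Type*} {l : Filter ι} {q : ℕ}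
    {A : ι → Matrix (Fin q) (Fin q) ℝ} {B : Matrix (Fin q) (Fin q) ℝ}
    {v : ι → Fin q → ℝ} {w : Fin q → ℝ}
    (hA : Tendsto A l (𝓝 B)) (hv : Tendsto v l (𝓝 w)) :
    Tendsto (fun i => A i *ᵥ v i) l (𝓝 (B *ᵥ w)) := by
  have hc : Continuous fun p : Matrix (Fin q) (Fin q) ℝ × (Fin q → ℝ) => p.1 *ᵥ p.2 :=
    continuous_fst.matrix_mulVec continuous_snd
  exact (hc.tendsto (B, w)).comp (hA.prodMk_nhds hv)

lemma tendsto_dotProduct {ι : Type*} {l : Filter ι} {q : ℕ}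
    {u v : ι → Fin q → ℝ} {a b : Fin q → ℝ}
    (hu : Tendsto u l (𝓝 a)) (hv : Tendsto v l (𝓝 b)) :
    Tendsto (fun i => u i ⬝ᵥ v i) l (𝓝 (a ⬝ᵥ b)) := by
  have hc : Continuous fun p : (Fin q → ℝ) × (Fin q → ℝ) => p.1 ⬝ᵥ p.2 :=
    continuous_fst.dotProduct continuous_snd
  exact (hc.tendsto (a, b)).comp (hu.prodMk_nhds hv)

/-- asymptotic bias of unadjusted OLS without Gaussianity.
Assuming only probability limits of the empirical moments, the OLS slope from
regressing `Y` on the noisy covariates `W` converges in probability to `κ̌ β`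
with `κ̌ = (S_X + Σ_ν)⁻¹ S_X`, and the unadjusted OLS estimator
`Ȳ₁ + (W̄₀ − W̄₁)ᵀ β̂` converges in probability to
`ψ₀¹ + (X̄₀ − X̄₁)ᵀ (κ̌ − I) β` where `ψ₀¹ = α + X̄₀ᵀ β`. -/
theorem stmt4 {Ω : Type*} [MeasurableSpace Ω] (P : Measure Ω) [IsProbabilityMeasure P]
    {q : ℕ} (W : ℕ → Ω → (Fin q → ℝ)) (Y : ℕ → Ω → ℝ)
    (W0bar : ℕ → Ω → (Fin q → ℝ))
    (SX Sν : Matrix (Fin q) (Fin q) ℝ) (hSW : IsUnit (SX + Sν).det)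
    (α : ℝ) (β : Fin q → ℝ) (X1bar X0bar : Fin q → ℝ)
    -- sample means and empirical moments
    (W1bar : ℕ → Ω → (Fin q → ℝ)) (Y1bar : ℕ → Ω → ℝ)
    (hW1bar : ∀ n ω, W1bar n ω = (1 / (n : ℝ)) • ∑ i ∈ Finset.range n, W i ω)
    (hY1bar : ∀ n ω, Y1bar n ω = (1 / (n : ℝ)) * ∑ i ∈ Finset.range n, Y i ω)
    (empCov : ℕ → Ω → Matrix (Fin q) (Fin q) ℝ)
    (hempCov : ∀ n ω, empCov n ω = (1 / (n : ℝ)) •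
      ∑ i ∈ Finset.range n, vecMulVec (W i ω - W1bar n ω) (W i ω - W1bar n ω))
    (empCross : ℕ → Ω → (Fin q → ℝ))
    (hempCross : ∀ n ω, empCross n ω = (1 / (n : ℝ)) •
      ∑ i ∈ Finset.range n, (Y i ω - Y1bar n ω) • (W i ω - W1bar n ω))
    -- the OLS slope estimator
    (βhat : ℕ → Ω → (Fin q → ℝ))
    (hβhat : ∀ n ω, βhat n ω = (empCov n ω)⁻¹ *ᵥ empCross n ω)
    -- hypotheses (1)-(4): convergence in probability of the empirical moments
    (h1 : ∀ j k, TendstoInMeasure P (fun n ω => empCov n ω j k) atTop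
      (fun _ => (SX + Sν) j k))
    (h2 : ∀ j, TendstoInMeasure P (fun n ω => empCross n ω j) atTop
      (fun _ => (SX *ᵥ β) j))
    (h3W : ∀ j, TendstoInMeasure P (fun n ω => W1bar n ω j) atTop (fun _ => X1bar j))
    (h3Y : TendstoInMeasure P (fun n ω => Y1bar n ω) atTop (fun _ => α + X1bar ⬝ᵥ β))
    (h4 : ∀ j, TendstoInMeasure P (fun n ω => W0bar n ω j) atTop (fun _ => X0bar j)) :
    (∀ j, TendstoInMeasure P (fun n ω => βhat n ω j) atTop
      (fun _ => (((SX + Sν)⁻¹ * SX) *ᵥ β) j)) ∧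
    TendstoInMeasure P
      (fun n ω => Y1bar n ω + (W0bar n ω - W1bar n ω) ⬝ᵥ βhat n ω) atTop
      (fun _ => (α + X0bar ⬝ᵥ β) +
        (X0bar - X1bar) ⬝ᵥ (((SX + Sν)⁻¹ * SX - 1) *ᵥ β)) := by
  simp only [tendstoInMeasure_const_iff] at h1 h2 h3W h3Y h4 ⊢
  have hcov : Tendsto (fun p : ℕ × Ω => empCov p.1 p.2) (probFilter P) (𝓝 (SX + Sν)) :=
    tendsto_pi_nhds.2 fun j => tendsto_pi_nhds.2 fun k => h1 j k
  have hcross : Tendsto (fun p : ℕ × Ω => empCross p.1 p.2) (probFilter P) (𝓝 (SX *ᵥ β)) :=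
    tendsto_pi_nhds.2 h2
  have hW1 : Tendsto (fun p : ℕ × Ω => W1bar p.1 p.2) (probFilter P) (𝓝 X1bar) :=
    tendsto_pi_nhds.2 h3W
  have hW0 : Tendsto (fun p : ℕ × Ω => W0bar p.1 p.2) (probFilter P) (𝓝 X0bar) :=
    tendsto_pi_nhds.2 h4
  have hβ : Tendsto (fun p : ℕ × Ω => βhat p.1 p.2) (probFilter P)
      (𝓝 (((SX + Sν)⁻¹ * SX) *ᵥ β)) := by
    simp only [hβhat, ← Matrix.mulVec_mulVec]
    exact tendsto_matrix_mulVec (tendsto_matrix_inv hcov hSW) hcross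
  refine ⟨tendsto_pi_nhds.1 hβ, ?_⟩
  have hdot : Tendsto (fun p : ℕ × Ω => (W0bar p.1 p.2 - W1bar p.1 p.2) ⬝ᵥ βhat p.1 p.2)
      (probFilter P) (𝓝 ((X0bar - X1bar) ⬝ᵥ (((SX + Sν)⁻¹ * SX) *ᵥ β))) :=
    tendsto_dotProduct (hW0.sub hW1) hβ
  convert h3Y.add hdot using 2
  rw [Matrix.sub_mulVec, Matrix.one_mulVec, dotProduct_sub, sub_dotProduct X0bar X1bar β]
  ring
end

section
/- Let T be a finite index set and Q ⊆ T a nonempty subset with n_Q = |Q|. Let W_i, X_i ∈ ℝ^q for i ∈ T, let Y_i = α + βᵀ X_i for fixed α ∈ ℝ, β ∈ ℝ^q, let W̄₁ ∈ ℝ^q and w₀ ∈ ℝ^q be arbitrary vectors, and let κ̌ be an invertible q×q matrix. Define W̄_Q = (1/n_Q) Σ_{i∈Q} W_i, X̄_Q = (1/n_Q) Σ_{i∈Q} X_i, S_{W_Q} = (1/n_Q) Σ_{i∈Q} (W_i − W̄_Q)(W_i − W̄_Q)ᵀ (assumed invertible), S_{XW_Q} = (1/n_Q) Σ_{i∈Q}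 (X_i − X̄_Q)(W_i − W̄_Q)ᵀ, and μ = W̄₁ + κ̌ᵀ(W̄_Q − W̄₁). Define weights γ_i = (1/n_Q) (W_i − W̄_Q)ᵀ S_{W_Q}^{-1} κ̌^{-T} (w₀ − μ) + 1/n_Q for i ∈ Q and γ_i = 0 otherwise. Then Σ_{i∈T} γ_i Y_i = α + βᵀ X̄_Q + βᵀ S_{XW_Q} S_{W_Q}^{-1} κ̌^{-T} (w₀ − μ). -/
/-! On the support `Q` the weights are `1 / n_Q` times one plus a linear functional of
`W i - W̄_Q`. The constant part averages the outcomes, giving `α + β ⬝ᵥ X̄_Q`. The functional sums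
to zero over `Q`, so the outcomes may be centred before pairing with it; the pairing is then
the cross-moment matrix `S_{XW_Q}` applied to the vector defining the functional. That vector
enters only as an arbitrary `v`. -/

open Matrix
open scoped BigOperators

/-- exact value of the support-restricted adjusted SBW estimator.
With weights `γ_i = (1/n_Q)(W_i − W̄_Q)ᵀ S_{W_Q}⁻¹ κ̌⁻ᵀ (w₀ − μ) + 1/n_Q` on `Q` and
zero off `Q`, and outcomes `Y_i = α + βᵀ X_i`, one has
`Σ_i γ_i Y_i = α + βᵀ X̄_Q + βᵀ S_{XW_Q} S_{W_Q}⁻¹ κ̌⁻ᵀ (w₀ − μ)`. -/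
theorem stmt11 {ι : Type*} [Fintype ι] {q : ℕ}
    (Q : Finset ι) (hQ : Q.Nonempty) (nQ : ℝ) (hnQ : nQ = (Q.card : ℝ))
    (W X : ι → Fin q → ℝ) (α : ℝ) (β : Fin q → ℝ)
    (Y : ι → ℝ) (hY : ∀ i, Y i = α + β ⬝ᵥ X i)
    (W1bar w0 : Fin q → ℝ)
    (κ : Matrix (Fin q) (Fin q) ℝ) (hκ : IsUnit κ.det)
    (WbarQ XbarQ : Fin q → ℝ)
    (hWbarQ : WbarQ = (1 / nQ) • ∑ i ∈ Q, W i)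
    (hXbarQ : XbarQ = (1 / nQ) • ∑ i ∈ Q, X i)
    (SWQ : Matrix (Fin q) (Fin q) ℝ)
    (hSWQ : SWQ = (1 / nQ) • ∑ i ∈ Q, vecMulVec (W i - WbarQ) (W i - WbarQ))
    (hSWQinv : IsUnit SWQ.det)
    (SXWQ : Matrix (Fin q) (Fin q) ℝ)
    (hSXWQ : SXWQ = (1 / nQ) • ∑ i ∈ Q, vecMulVec (X i - XbarQ) (W i - WbarQ))
    (μ : Fin q → ℝ) (hμ : μ = W1bar + κᵀ *ᵥ (WbarQ - W1bar))
    (γ : ι → ℝ)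
    (hγ : ∀ i ∈ Q,
      γ i = (1 / nQ) * ((W i - WbarQ) ⬝ᵥ (SWQ⁻¹ *ᵥ ((κ⁻¹)ᵀ *ᵥ (w0 - μ)))) + 1 / nQ)
    (hγ0 : ∀ i ∉ Q, γ i = 0) :
    ∑ i, γ i * Y i
      = α + β ⬝ᵥ XbarQ + β ⬝ᵥ (SXWQ *ᵥ (SWQ⁻¹ *ᵥ ((κ⁻¹)ᵀ *ᵥ (w0 - μ)))) := by
  have hn : nQ ≠ 0 := by
    rw [hnQ]
    exact_mod_cast hQ.card_pos.ne'
  generalize SWQ⁻¹ *ᵥ ((κ⁻¹)ᵀ *ᵥ (w0 - μ)) = v at hγ ⊢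
  -- The tilting part of the weights sums to zero because `W` is centred on `Q`.
  have hd : ∑ i ∈ Q, (W i - WbarQ) ⬝ᵥ v = 0 := by
    rw [← sum_dotProduct, Finset.sum_sub_distrib, Finset.sum_const, ← Nat.cast_smul_eq_nsmul ℝ,
      ← hnQ, hWbarQ, smul_smul, mul_one_div_cancel hn, one_smul, sub_self, zero_dotProduct]
  have hm : ∑ i ∈ Q, β ⬝ᵥ X i = nQ * (β ⬝ᵥ XbarQ) := by
    rw [hXbarQ, dotProduct_smul, dotProduct_sum, smul_eq_mul, ← mul_assoc,
      mul_one_div_cancel hn, one_mul]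
  have hS : β ⬝ᵥ (SXWQ *ᵥ v)
      = (1 / nQ) * ∑ i ∈ Q, (β ⬝ᵥ X i - β ⬝ᵥ XbarQ) * ((W i - WbarQ) ⬝ᵥ v) := by
    rw [hSXWQ, smul_mulVec, sum_mulVec, dotProduct_smul, dotProduct_sum, smul_eq_mul]
    congr 1
    refine Finset.sum_congr rfl fun i _ => ?_
    rw [vecMulVec_mulVec, op_smul_eq_smul, dotProduct_smul, dotProduct_sub, smul_eq_mul, mul_comm]
  have hsupp : ∑ i, γ i * Y i = ∑ i ∈ Q, γ i * Y i :=
    (Finset.sum_subset (Finset.subset_univ Q) fun i _ hi => by rw [hγ0 i hi, zero_mul]).symm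
  -- Replacing `β ⬝ᵥ X i` by its deviation from the mean isolates the cross-moment term.
  have hterm : ∀ i ∈ Q, γ i * Y i
      = (1 / nQ) * ((β ⬝ᵥ X i - β ⬝ᵥ XbarQ) * ((W i - WbarQ) ⬝ᵥ v))
        + (1 / nQ) * (α + β ⬝ᵥ XbarQ) * ((W i - WbarQ) ⬝ᵥ v)
        + ((1 / nQ) * α + (1 / nQ) * (β ⬝ᵥ X i)) := fun i hi => by
    rw [hγ i hi, hY i]
    ring
  rw [hsupp, Finset.sum_congr rfl hterm, hS]
  simp only [Finset.sum_add_distrib, ← Finset.mul_sum, hd, hm, Finset.sum_const, nsmul_eq_mul,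
    ← hnQ]
  field_simp
  ring
end

section
/- Let (X_i, W_i)_{i=1}^n be random vectors in ℝ^q × ℝ^q with arbitrary joint distribution, and let outcomes satisfy Y_i = α + X_iᵀ β + e_i, where E[e_i | W₁, …, W_n] = 0 almost surely and all relevant quantities are integrable. Let X̃*_i = E[X_i | W₁, …, W_n] be the conditional expectation of X_i given the noisy observations, and let γ̃* be any measurable function of (W₁, …, W_n) taking values in {γ ∈ ℝ^n : γ ≥ 0, Σ_i γ_i = 1, Σ_i γ_i X̃*_i = X̄₀} for a fixed vector X̄₀ ∈ ℝ^q. Then E[Σ_{i=1}^n γ̃*_i Y_i] = α + X̄₀ᵀ β = ψ₀¹. -/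
/-! The weights are `σ(W)`-measurable, so they pull out of the conditional expectation:
`E[γᵢ Yᵢ | W] = γᵢ E[Yᵢ | W] = γᵢ (α + X̃*ᵢ ⬝ β)`, the last step because `E[eᵢ | W] = 0`
(`condExp_outcome`).  Summing over `i`, the normalization and exact balance constraints make
`E[∑ᵢ γᵢ Yᵢ | W]` almost surely equal to the constant `α + X̄₀ ⬝ β`, and the tower property
concludes. -/

open MeasureTheory ProbabilityTheory Matrix
open scoped BigOperators

/-- The regression function of an outcome on the noisy covariates: under the linear model with
conditionally centred errors, `E[α + X ⬝ β + e | m] = α + E[X | m] ⬝ β`. -/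
lemma condExp_outcome {Ω : Type*} {m m0 : MeasurableSpace Ω} (hm : m ≤ m0)
    (P : Measure[m0] Ω) [IsProbabilityMeasure P] {q : ℕ} (X Xt : Ω → (Fin q → ℝ))
    (α : ℝ) (β : Fin q → ℝ) (e : Ω → ℝ)
    (heint : Integrable e P) (he0 : P[e | m] =ᵐ[P] fun _ => (0 : ℝ))
    (hXint : ∀ j, Integrable (fun ω => X ω j) P)
    (hXt : ∀ j, (fun ω => Xt ω j) =ᵐ[P] P[(fun ω => X ω j) | m]) :
    P[(fun ω => α + X ω ⬝ᵥ β + e ω) | m] =ᵐ[P] fun ω => α + Xt ω ⬝ᵥ β := by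
  have hterm : ∀ j, Integrable (β j • fun ω => X ω j) P := fun j => (hXint j).smul (β j)
  have hsum : Integrable (∑ j, β j • fun ω => X ω j) P := integrable_finsetSum' _ fun j _ => hterm j
  have hconst : Integrable (fun _ : Ω => α) P := integrable_const α
  have hfun : (fun ω => α + X ω ⬝ᵥ β + e ω)
      = ((fun _ => α) + ∑ j, β j • fun ω => X ω j) + e := by
    funext ω
    simp [dotProduct, Finset.sum_apply, mul_comm]
  rw [hfun]
  have h1 := condExp_add (hconst.add hsum) heint m
  have h2 := condExp_add hconst hsum m
  have h3 := condExp_finsetSum (s := Finset.univ) (fun j _ => hterm j) m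
  have h4 : ∀ᵐ ω ∂P, ∀ j, (P[β j • (fun ω => X ω j) | m]) ω = β j * Xt ω j := by
    rw [ae_all_iff]
    intro j
    filter_upwards [condExp_smul (μ := P) (β j) (fun ω => X ω j) m, hXt j] with ω ha hb
    rw [ha, hb]
    rfl
  filter_upwards [h1, h2, h3, h4, he0] with ω g1 g2 g3 g4 g5
  rw [g1, Pi.add_apply, g2, Pi.add_apply, g3, g5, condExp_const hm]
  simp [dotProduct, Finset.sum_apply, g4, mul_comm]

/-- Proposition 7 and its H-SBW analogue: unbiasedness of
balancing on the conditional expectations.  With arbitrary joint distribution of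
`(X_i, W_i)`, outcomes `Y_i = α + X_iᵀβ + e_i` where `E[e_i | W] = 0` a.s.,
weights measurable with respect to `σ(W)` that exactly balance
`X̃*_i = E[X_i | W]` to `X̄₀` give an estimator with mean `ψ₀¹ = α + X̄₀ᵀβ`. -/
theorem stmt12 {Ω : Type*} [MeasurableSpace Ω] (P : Measure Ω) [IsProbabilityMeasure P]
    {q n : ℕ}
    (X W : Fin n → Ω → (Fin q → ℝ))
    (hXm : ∀ i, Measurable (X i)) (hWm : ∀ i, Measurable (W i))
    (α : ℝ) (β : Fin q → ℝ) (e : Fin n → Ω → ℝ)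
    (Y : Fin n → Ω → ℝ) (hY : ∀ i ω, Y i ω = α + X i ω ⬝ᵥ β + e i ω)
    (mW : MeasurableSpace Ω)
    (hmW : mW = MeasurableSpace.comap (fun ω => fun i => W i ω) MeasurableSpace.pi)
    (heint : ∀ i, Integrable (e i) P)
    (he0 : ∀ i, P[e i | mW] =ᵐ[P] fun _ => (0 : ℝ))
    (hXint : ∀ i j, Integrable (fun ω => X i ω j) P)
    -- X̃*_i is (a version of) the conditional expectation E[X_i | W]
    (Xts : Fin n → Ω → (Fin q → ℝ))
    (hXts : ∀ i j, (fun ω => Xts i ω j) =ᵐ[P] P[(fun ω => X i ω j) | mW])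
    (X0bar : Fin q → ℝ)
    -- the weights: measurable w.r.t. σ(W), in the exact-balance constraint set
    (γ : Ω → Fin n → ℝ) (hγm : Measurable[mW] γ)
    (hγfeas : ∀ ω, (∀ i, 0 ≤ γ ω i) ∧ (∑ i, γ ω i = 1) ∧
      (∑ i, γ ω i • Xts i ω = X0bar))
    (hint : ∀ i, Integrable (fun ω => γ ω i * Y i ω) P) :
    ∫ ω, ∑ i, γ ω i * Y i ω ∂P = α + X0bar ⬝ᵥ β := by
  rename_i m0 _
  have hm : mW ≤ m0 := by
    rw [hmW]
    exact (@measurable_pi_lambda _ _ _ m0 _ _ hWm).comap_le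
  have hYint : ∀ i, Integrable (Y i) P := by
    intro i
    have hdot : Integrable (fun ω => X i ω ⬝ᵥ β) P :=
      integrable_finsetSum _ fun j _ => (hXint i j).mul_const (β j)
    rw [show Y i = fun ω => α + X i ω ⬝ᵥ β + e i ω from funext (hY i)]
    exact ((integrable_const α).add hdot).add (heint i)
  have hYc : ∀ i, P[Y i | mW] =ᵐ[P] fun ω => α + Xts i ω ⬝ᵥ β := by
    intro i
    rw [show Y i = fun ω => α + X i ω ⬝ᵥ β + e i ω from funext (hY i)]
    exact condExp_outcome hm P (X i) (Xts i) α β (e i) (heint i) (he0 i) (hXint i) (hXts i)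
  have hγY : ∀ i, P[(fun ω => γ ω i * Y i ω) | mW] =ᵐ[P]
      fun ω => γ ω i * (α + Xts i ω ⬝ᵥ β) := by
    intro i
    have hsm : StronglyMeasurable[mW] fun ω => γ ω i :=
      ((measurable_pi_apply i).comp hγm).stronglyMeasurable
    filter_upwards [condExp_mul_of_stronglyMeasurable_left hsm (hint i) (hYint i), hYc i]
      with ω h1 h2
    exact h1.trans (by rw [Pi.mul_apply, h2])
  -- Pointwise, the constraints collapse the weighted regression functions to a constant.
  have hbal : ∀ ω, ∑ i, γ ω i * (α + Xts i ω ⬝ᵥ β) = α + X0bar ⬝ᵥ β := by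
    intro ω
    obtain ⟨-, hone, hX⟩ := hγfeas ω
    rw [← hX, sum_dotProduct]
    simp only [mul_add, Finset.sum_add_distrib, ← Finset.sum_mul, hone, one_mul,
      smul_dotProduct, smul_eq_mul]
  calc ∫ ω, ∑ i, γ ω i * Y i ω ∂P
      = ∑ i, ∫ ω, γ ω i * Y i ω ∂P := integral_finsetSum _ fun i _ => hint i
    _ = ∑ i, ∫ ω, γ ω i * (α + Xts i ω ⬝ᵥ β) ∂P := by
        refine Finset.sum_congr rfl fun i _ => ?_
        rw [← integral_condExp hm, integral_congr_ae (hγY i)]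
    _ = ∫ ω, ∑ i, γ ω i * (α + Xts i ω ⬝ᵥ β) ∂P :=
        (integral_finsetSum _ fun i _ => integrable_condExp.congr (hγY i)).symm
    _ = α + X0bar ⬝ᵥ β := by simp [hbal]
end

section
/- Let Ω be a positive definite n×n real matrix, Z a q×n real matrix, and v ∈ ℝ^q, and suppose γ* solves min_γ γᵀ Ω γ subject to Zγ = v, 1ᵀγ = 1, γ ≥ 0, with support Q = {i : γ*_i > 0}. Let Z_Q be the submatrix of columns indexed by Q, Ω_Q the principal submatrix of Ω on Q, 𝟏 the all-ones vector, μ = Z_Q Ω_Q^{-1} 𝟏 / (𝟏ᵀ Ω_Q^{-1} 𝟏), and assume (Z_Q − μ𝟏ᵀ) Ω_Q^{-1} (Z_Q − μ𝟏ᵀ)ᵀ is invertible. Then the nonzero entries of γ* satisfy γ*_Q = Ω_Q^{-1} (Z_Q − μ𝟏ᵀ)ᵀ [ (Z_Q − μ𝟏ᵀ) Ω_Q^{-1} (Z_Q − μ𝟏ᵀ)ᵀ ]^{-1} (v − μ) + Ω_Q^{-1} 𝟏 / (𝟏ᵀ Ω_Q^{-1} 𝟏); these are the implied regression weights of generalized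 least squares with weight matrix Ω_Q^{-1} fit on the subset Q. -/
/-!
Write `g` for the restriction of `γ*` to its support `Q`, and `w` for the claimed closed form.
Since `Zc Ω_Q⁻¹ 𝟏 = 0` by the choice of `μ`, the vector `w` satisfies the same equality
constraints as `g` (`gls_balance`, `gls_sum`), and `Ω_Q w` is a combination of `𝟏` and the rows of
`Zc`. Hence `d = w - g` satisfies `Zc d = 0`, `𝟏ᵀ d = 0` and therefore `dᵀ Ω_Q w = 0`. Because `g`
is strictly positive, `g + t d` is feasible for small `t > 0`, and its objective value is
`gᵀ Ω_Q g - t (2 - t) dᵀ Ω_Q d`. Minimality of `γ*` forces `dᵀ Ω_Q d ≤ 0`, so `d = 0` by positive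
definiteness. The nonnegativity constraints thus enter only through the support.
-/

open Matrix
open scoped BigOperators

/-- A sum over the whole index type of a function vanishing off `Q` is a sum over `Q`. -/
lemma sum_eq_sum_support {n : ℕ} (Q : Finset (Fin n)) (f : Fin n → ℝ)
    (hf : ∀ i, i ∉ Q → f i = 0) : ∑ i, f i = ∑ a : {i // i ∈ Q}, f a.1 := by
  rw [Finset.sum_coe_sort Q f]
  exact (Finset.sum_subset (Finset.subset_univ Q) (fun i _ hi => hf i hi)).symm

/-- The GLS implied weights balance the centered covariates to the centered target. -/
lemma gls_balance {ι κ : Type*} [Fintype ι] [DecidableEq ι] [Fintype κ] [DecidableEq κ]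
    (A : Matrix ι ι ℝ) (C : Matrix κ ι ℝ) (c : ℝ) (u : κ → ℝ)
    (hC : C *ᵥ (A⁻¹ *ᵥ 1) = 0) (hinv : IsUnit (C * A⁻¹ * Cᵀ).det) :
    C *ᵥ (A⁻¹ *ᵥ (Cᵀ *ᵥ ((C * A⁻¹ * Cᵀ)⁻¹ *ᵥ u)) + c • (A⁻¹ *ᵥ 1)) = u := by
  rw [mulVec_add, mulVec_smul, hC, smul_zero, add_zero, mulVec_mulVec, mulVec_mulVec,
    mulVec_mulVec, Matrix.mul_nonsing_inv _ hinv, one_mulVec]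

/-- The GLS implied weights sum to one, whatever the multiplier `l` of the balance constraints. -/
lemma gls_sum {ι κ : Type*} [Fintype ι] [DecidableEq ι] [Fintype κ]
    (A : Matrix ι ι ℝ) (hA : Aᵀ = A) (C : Matrix κ ι ℝ) (l : κ → ℝ)
    (hC : C *ᵥ (A⁻¹ *ᵥ 1) = 0) (hs : (1 : ι → ℝ) ⬝ᵥ (A⁻¹ *ᵥ 1) ≠ 0) :
    (1 : ι → ℝ) ⬝ᵥ (A⁻¹ *ᵥ (Cᵀ *ᵥ l)
      + (1 / ((1 : ι → ℝ) ⬝ᵥ (A⁻¹ *ᵥ 1))) • (A⁻¹ *ᵥ 1)) = 1 := by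
  have h1 : (1 : ι → ℝ) ⬝ᵥ (A⁻¹ *ᵥ (Cᵀ *ᵥ l)) = 0 := by
    have hAi : A⁻¹ᵀ = A⁻¹ := by rw [transpose_nonsing_inv, hA]
    rw [dotProduct_mulVec, ← mulVec_transpose, hAi, dotProduct_mulVec, vecMul_transpose, hC,
      zero_dotProduct]
  rw [dotProduct_add, h1, dotProduct_smul, smul_eq_mul, one_div, inv_mul_cancel₀ hs, zero_add]

/-- First-order condition: weights of the GLS form, with any multipliers `l` and `c`, are
`A`-orthogonal to every direction that preserves the equality constraints. -/
lemma gls_orth {ι κ : Type*} [Fintype ι] [DecidableEq ι] [Fintype κ]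
    (A : Matrix ι ι ℝ) (hdet : IsUnit A.det) (C : Matrix κ ι ℝ) (l : κ → ℝ) (c : ℝ)
    (d : ι → ℝ) (hd : C *ᵥ d = 0) (hd1 : (1 : ι → ℝ) ⬝ᵥ d = 0) :
    d ⬝ᵥ (A *ᵥ (A⁻¹ *ᵥ (Cᵀ *ᵥ l) + c • (A⁻¹ *ᵥ 1))) = 0 := by
  have hcancel : ∀ y : ι → ℝ, A *ᵥ (A⁻¹ *ᵥ y) = y := fun y => by
    rw [mulVec_mulVec, Matrix.mul_nonsing_inv _ hdet, one_mulVec]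
  rw [mulVec_add, mulVec_smul, hcancel, hcancel, dotProduct_add, dotProduct_smul, dotProduct_mulVec, vecMul_transpose,
    hd, zero_dotProduct, dotProduct_comm d 1, hd1, smul_zero, zero_add]

/-- Objective value along the segment from `g` towards a point `g + d` that is `A`-orthogonal
to `d`. -/
lemma quad_segment {ι : Type*} [Fintype ι] (A : Matrix ι ι ℝ) (hA : Aᵀ = A) (g d : ι → ℝ) (t : ℝ)
    (horth : d ⬝ᵥ (A *ᵥ (g + d)) = 0) :
    (g + t • d) ⬝ᵥ (A *ᵥ (g + t • d)) =
      g ⬝ᵥ (A *ᵥ g) - t * (2 - t) * (d ⬝ᵥ (A *ᵥ d)) := by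
  have hsymm : g ⬝ᵥ (A *ᵥ d) = d ⬝ᵥ (A *ᵥ g) := by
    rw [dotProduct_mulVec, ← mulVec_transpose, hA, dotProduct_comm]
  rw [mulVec_add, dotProduct_add] at horth
  simp only [mulVec_add, mulVec_smul, dotProduct_add, add_dotProduct, dotProduct_smul,
    smul_dotProduct, smul_eq_mul, hsymm]
  linear_combination 2 * t * horth

/-- A strictly positive vector stays nonnegative after a small step in any direction. -/
lemma exists_small_step {ι : Type*} [Finite ι] (g d : ι → ℝ) (hg : ∀ a, 0 < g a) :
    ∃ t : ℝ, 0 < t ∧ t < 1 ∧ ∀ a, 0 ≤ g a + t * d a := by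
  have h1 : ∀ᶠ t : ℝ in nhdsWithin 0 (Set.Ioi 0), ∀ a, 0 ≤ g a + t * d a := by
    refine nhdsWithin_le_nhds (Filter.eventually_all.2 fun a => ?_)
    have hc : ContinuousAt (fun t : ℝ => g a + t * d a) 0 := by fun_prop
    have := hc.eventually (lt_mem_nhds (a := 0) (by simpa using hg a))
    exact this.mono fun t ht => le_of_lt ht
  have h2 : ∀ᶠ t : ℝ in nhdsWithin 0 (Set.Ioi 0), t < 1 :=
    nhdsWithin_le_nhds (gt_mem_nhds one_pos)
  have h3 : ∀ᶠ t : ℝ in nhdsWithin 0 (Set.Ioi 0), 0 < t := self_mem_nhdsWithin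
  obtain ⟨t, h1, h2, h3⟩ := (h1.and (h2.and h3)).exists
  exact ⟨t, h3, h2, h1⟩

/-- balancing weights are GLS implied regression weights on their
support.  If `γ*` minimizes `γᵀ Ω γ` over nonnegative weights summing to one that
balance the columns of `Z` to `v`, and `Q` is its support, then on `Q` the weights
have the closed form
`γ*_Q = Ω_Q⁻¹ (Z_Q − μ𝟏ᵀ)ᵀ [(Z_Q − μ𝟏ᵀ) Ω_Q⁻¹ (Z_Q − μ𝟏ᵀ)ᵀ]⁻¹ (v − μ) + Ω_Q⁻¹𝟏/(𝟏ᵀΩ_Q⁻¹𝟏)`,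
with `μ = Z_Q Ω_Q⁻¹ 𝟏 / (𝟏ᵀ Ω_Q⁻¹ 𝟏)`. -/
theorem stmt16 {n q : ℕ} (Om : Matrix (Fin n) (Fin n) ℝ) (hOm : Om.PosDef)
    (Z : Matrix (Fin q) (Fin n) ℝ) (v : Fin q → ℝ)
    (γstar : Fin n → ℝ)
    (hfeas : (Z *ᵥ γstar = v) ∧ (∑ i, γstar i = 1) ∧ (∀ i, 0 ≤ γstar i))
    (hmin : ∀ γ : Fin n → ℝ,
      (Z *ᵥ γ = v) → (∑ i, γ i = 1) → (∀ i, 0 ≤ γ i) →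
        γstar ⬝ᵥ (Om *ᵥ γstar) ≤ γ ⬝ᵥ (Om *ᵥ γ))
    (Q : Finset (Fin n)) (hQ : ∀ i, i ∈ Q ↔ 0 < γstar i)
    -- submatrices on the support `Q`
    (OmQ : Matrix {i // i ∈ Q} {i // i ∈ Q} ℝ) (hOmQ : ∀ a b, OmQ a b = Om a.1 b.1)
    (ZQ : Matrix (Fin q) {i // i ∈ Q} ℝ) (hZQ : ∀ j a, ZQ j a = Z j a.1)
    (μ : Fin q → ℝ)
    (hμ : μ = (1 / ((1 : {i // i ∈ Q} → ℝ) ⬝ᵥ (OmQ⁻¹ *ᵥ 1))) • (ZQ *ᵥ (OmQ⁻¹ *ᵥ 1)))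
    (Zc : Matrix (Fin q) {i // i ∈ Q} ℝ) (hZc : ∀ j a, Zc j a = ZQ j a - μ j)
    (hinv : IsUnit (Zc * OmQ⁻¹ * Zcᵀ).det) :
    ∀ a : {i // i ∈ Q},
      γstar a.1 =
        (OmQ⁻¹ *ᵥ (Zcᵀ *ᵥ ((Zc * OmQ⁻¹ * Zcᵀ)⁻¹ *ᵥ (v - μ)))) a
          + (1 / ((1 : {i // i ∈ Q} → ℝ) ⬝ᵥ (OmQ⁻¹ *ᵥ 1))) * (OmQ⁻¹ *ᵥ 1) a := by
  obtain ⟨hbal, hsum, hnn⟩ := hfeas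
  have hoff : ∀ i, i ∉ Q → γstar i = 0 := fun i hi =>
    le_antisymm (not_lt.1 fun h => hi ((hQ i).2 h)) (hnn i)
  have hPD : OmQ.PosDef := by
    have : OmQ = Om.submatrix Subtype.val Subtype.val := by ext a b; exact hOmQ a b
    rw [this]
    exact hOm.submatrix Subtype.val_injective
  have hsym : OmQᵀ = OmQ := by simpa using hPD.isHermitian.eq
  have hdet : IsUnit OmQ.det := hPD.det_pos.ne'.isUnit
  -- For vectors supported on `Q`, constraints and objective only see the restriction to `Q`.
  have rZ : ∀ x : Fin n → ℝ, (∀ i, i ∉ Q → x i = 0) →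
      Z *ᵥ x = ZQ *ᵥ (fun a => x a.1) := by
    intro x hx
    ext j
    simp only [mulVec, dotProduct, hZQ]
    exact sum_eq_sum_support Q (fun i => Z j i * x i) fun i hi => by simp [hx i hi]
  have rO : ∀ x : Fin n → ℝ, (∀ i, i ∉ Q → x i = 0) →
      x ⬝ᵥ (Om *ᵥ x) = (fun a : {i // i ∈ Q} => x a.1) ⬝ᵥ (OmQ *ᵥ fun a => x a.1) := by
    intro x hx
    simp only [mulVec, dotProduct, hOmQ]
    rw [sum_eq_sum_support Q _ fun i hi => by simp [hx i hi]]
    refine Finset.sum_congr rfl fun a _ => ?_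
    rw [sum_eq_sum_support Q (fun i => Om a.1 i * x i) fun i hi => by simp [hx i hi]]
  set g : {i // i ∈ Q} → ℝ := fun a => γstar a.1 with hgdef
  have hgpos : ∀ a, 0 < g a := fun a => (hQ a.1).1 a.2
  have hg1 : (1 : {i // i ∈ Q} → ℝ) ⬝ᵥ g = 1 := by
    rw [one_dotProduct, ← hsum, sum_eq_sum_support Q γstar hoff]
  have hgZ : ZQ *ᵥ g = v := by rw [← hbal, rZ γstar hoff]
  have hs : (1 : {i // i ∈ Q} → ℝ) ⬝ᵥ (OmQ⁻¹ *ᵥ 1) ≠ 0 := by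
    -- The support is nonempty because the weights sum to one.
    have hne : (1 : {i // i ∈ Q} → ℝ) ≠ 0 := by
      intro h
      rw [h, zero_dotProduct] at hg1
      exact zero_ne_one hg1
    simpa using (hPD.inv.dotProduct_mulVec_pos hne).ne'
  have hZcmul : ∀ x : {i // i ∈ Q} → ℝ,
      Zc *ᵥ x = ZQ *ᵥ x - ((1 : {i // i ∈ Q} → ℝ) ⬝ᵥ x) • μ := by
    intro x
    ext j
    simp only [mulVec, dotProduct, hZc, Pi.sub_apply, Pi.smul_apply, smul_eq_mul, Pi.one_apply,
      one_mul, sub_mul, Finset.sum_sub_distrib, Finset.sum_mul]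
    congr 1
    exact Finset.sum_congr rfl fun a _ => mul_comm _ _
  have hZc1 : Zc *ᵥ (OmQ⁻¹ *ᵥ 1) = 0 := by
    rw [hZcmul, hμ, smul_smul, mul_one_div_cancel hs, one_smul, sub_self]
  set l := (Zc * OmQ⁻¹ * Zcᵀ)⁻¹ *ᵥ (v - μ) with hl
  set c := 1 / ((1 : {i // i ∈ Q} → ℝ) ⬝ᵥ (OmQ⁻¹ *ᵥ 1)) with hc
  set w := OmQ⁻¹ *ᵥ (Zcᵀ *ᵥ l) + c • (OmQ⁻¹ *ᵥ 1) with hw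
  have hwZ : Zc *ᵥ w = v - μ := gls_balance OmQ Zc c (v - μ) hZc1 hinv
  have hw1 : (1 : {i // i ∈ Q} → ℝ) ⬝ᵥ w = 1 := gls_sum OmQ hsym Zc l hZc1 hs
  obtain ⟨d, hd⟩ : ∃ d, d = w - g := ⟨_, rfl⟩
  have hd1 : (1 : {i // i ∈ Q} → ℝ) ⬝ᵥ d = 0 := by
    rw [hd, dotProduct_sub, hw1, hg1, sub_self]
  have hdZ : Zc *ᵥ d = 0 := by
    rw [hd, mulVec_sub, hwZ, hZcmul g, hgZ, hg1, one_smul, sub_self]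
  have hdZQ : ZQ *ᵥ d = 0 := by
    have := hZcmul d
    rw [hdZ, hd1, zero_smul, sub_zero] at this
    exact this.symm
  have horth : d ⬝ᵥ (OmQ *ᵥ (g + d)) = 0 := by
    have : g + d = w := by rw [hd]; abel
    rw [this]
    exact gls_orth OmQ hdet Zc l c d hdZ hd1
  obtain ⟨t, ht0, ht1, ht⟩ := exists_small_step g d hgpos
  -- Extend the perturbed restriction `g + t d` by zero to a feasible competitor.
  obtain ⟨x, hx⟩ : ∃ x : Fin n → ℝ,
      x = fun i => if h : i ∈ Q then g ⟨i, h⟩ + t * d ⟨i, h⟩ else 0 := ⟨_, rfl⟩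
  have hxoff : ∀ i, i ∉ Q → x i = 0 := fun i hi => by simp [hx, hi]
  have hxQ : (fun a : {i // i ∈ Q} => x a.1) = g + t • d := by
    ext a
    simp [hx]
  have hle := hmin x
    (by rw [rZ x hxoff, hxQ, mulVec_add, mulVec_smul, hdZQ, smul_zero, add_zero, hgZ])
    (by
      rw [sum_eq_sum_support Q x hxoff, ← one_dotProduct, hxQ, dotProduct_add, dotProduct_smul,
        hd1, smul_zero, add_zero, hg1])
    (by
      intro i
      by_cases h : i ∈ Q
      · simpa [hx, h] using ht ⟨i, h⟩
      · rw [hxoff i h])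
  rw [rO x hxoff, rO γstar hoff, hxQ, quad_segment OmQ hsym g d t horth] at hle
  have hd0 : d = 0 := by
    by_contra hne
    have hpos : 0 < d ⬝ᵥ (OmQ *ᵥ d) := by simpa using hPD.dotProduct_mulVec_pos hne
    have : 0 < t * (2 - t) * (d ⬝ᵥ (OmQ *ᵥ d)) :=
      mul_pos (mul_pos ht0 (by linarith)) hpos
    linarith
  intro a
  have hwg : w = g := sub_eq_zero.1 (hd ▸ hd0)
  have := congrFun hwg a
  simpa [hw, hgdef] using this.symm
end

section
/- Let ρ ∈ [0, 1) and let p_s ≥ 1 be integers for s = 1, …, m. Consider minimizing f(γ) = Σ_{s=1}^m ( Σ_{c=1}^{p_s} γ_{sc}² + ρ Σ_{c ≠ d} γ_{sc} γ_{sd} ) over all weight vectors γ = (γ_{sc}) with γ ≥ 0 and Σ_{s,c} γ_{sc} = 1. The unique minimizer assigns equal weight to all units within a state and is given by γ_{sc} = c_s / (Σ_{t=1}^m p_t c_t), where c_s = 1 / ((p_s − 1)ρ + 1). -/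
/-!
The criterion equals `Σ_s ((1 - ρ) Σ_c γ_{sc}² + ρ (Σ_c γ_{sc})²)`, a positive definite quadratic
form for `0 ≤ ρ < 1`. At `γ*` its gradient has all coordinates equal: the half-gradient is
`((p_s - 1) ρ + 1) c_s / T = 1 / T` with `T = Σ_t p_t c_t`. So the cross term in the expansion
around `γ*` vanishes on directions of total weight zero, which gives `f(γ) = f(γ*) + f(γ - γ*)`
for every `γ` of total weight one (`hsbwCriterion_eq_add`). Minimality and uniqueness are then
nonnegativity and definiteness of the form.
-/

open scoped BigOperators

/-- The H-SBW criterion: `f(γ) = Σ_s (Σ_c γ_{sc}² + ρ Σ_{c ≠ d} γ_{sc} γ_{sd})`. -/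
def hsbwCriterion {m : ℕ} {p : Fin m → ℕ} (ρ : ℝ) (γ : (s : Fin m) → Fin (p s) → ℝ) : ℝ :=
  ∑ s, ((∑ c, (γ s c) ^ 2) +
    ρ * ∑ c, ∑ d, if c ≠ d then γ s c * γ s d else 0)

/-- Completing the off-diagonal cross products to a full square of the state total. -/
lemma hsbwCriterion_eq {m : ℕ} {p : Fin m → ℕ} (ρ : ℝ) (γ : (s : Fin m) → Fin (p s) → ℝ) :
    hsbwCriterion ρ γ = ∑ s, ((1 - ρ) * (∑ c, (γ s c) ^ 2) + ρ * (∑ c, γ s c) ^ 2) := by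
  unfold hsbwCriterion
  refine Finset.sum_congr rfl fun s _ => ?_
  have h : ∀ c d : Fin (p s), (if c ≠ d then γ s c * γ s d else 0)
      = γ s c * γ s d - if c = d then γ s c * γ s d else 0 := by
    intro c d
    by_cases hcd : c = d <;> simp [hcd]
  have h2 : (∑ c, ∑ d, if c ≠ d then γ s c * γ s d else 0)
      = (∑ c, γ s c) ^ 2 - ∑ c, (γ s c) ^ 2 := by
    simp only [h, Finset.sum_sub_distrib, Finset.sum_ite_eq, Finset.mem_univ, if_true]
    rw [sq, Finset.sum_mul_sum]
    simp only [sq]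
  rw [h2]
  ring

lemma hsbwCriterion_nonneg {m : ℕ} {p : Fin m → ℕ} {ρ : ℝ} (hρ0 : 0 ≤ ρ) (hρ1 : ρ < 1)
    (γ : (s : Fin m) → Fin (p s) → ℝ) : 0 ≤ hsbwCriterion ρ γ := by
  have h1 : 0 ≤ 1 - ρ := by linarith
  rw [hsbwCriterion_eq]
  positivity

lemma eq_zero_of_hsbwCriterion_eq_zero {m : ℕ} {p : Fin m → ℕ} {ρ : ℝ} (hρ0 : 0 ≤ ρ)
    (hρ1 : ρ < 1) (γ : (s : Fin m) → Fin (p s) → ℝ) (h : hsbwCriterion ρ γ = 0)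
    (s : Fin m) (c : Fin (p s)) : γ s c = 0 := by
  have h1 : 0 < 1 - ρ := by linarith
  rw [hsbwCriterion_eq, Finset.sum_eq_zero_iff_of_nonneg (fun s _ => by positivity)] at h
  have hs := h s (Finset.mem_univ s)
  have h2 : 0 ≤ ρ * (∑ c, γ s c) ^ 2 := by positivity
  have h3 : 0 ≤ ∑ c, (γ s c) ^ 2 := by positivity
  have h4 : ∑ c, (γ s c) ^ 2 = 0 := by nlinarith
  rw [Finset.sum_eq_zero_iff_of_nonneg (fun c _ => by positivity)] at h4
  exact pow_eq_zero_iff two_ne_zero |>.mp (h4 c (Finset.mem_univ c))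

/-- If `a` is constant within states and the half-gradient of the criterion at `a` has all its
coordinates equal to `l`, then the criterion splits orthogonally at `a` on the hyperplane of vectors
with the same total weight as `a`. -/
lemma hsbwCriterion_eq_add {m : ℕ} {p : Fin m → ℕ} (ρ l : ℝ) (a : Fin m → ℝ)
    (ha : ∀ s, (((p s : ℝ) - 1) * ρ + 1) * a s = l) (γ : (s : Fin m) → Fin (p s) → ℝ)
    (hγ : ∑ s, ∑ c, γ s c = ∑ s, (p s : ℝ) * a s) :
    hsbwCriterion ρ γ = hsbwCriterion (p := p) ρ (fun s _ => a s)
      + hsbwCriterion ρ (fun s c => γ s c - a s) := by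
  have key : ∀ s, (1 - ρ) * (∑ c, (γ s c) ^ 2) + ρ * (∑ c, γ s c) ^ 2
      = (1 - ρ) * (∑ _c : Fin (p s), (a s) ^ 2) + ρ * (∑ _c : Fin (p s), a s) ^ 2
        + ((1 - ρ) * (∑ c, (γ s c - a s) ^ 2) + ρ * (∑ c, (γ s c - a s)) ^ 2)
        + 2 * l * ((∑ c, γ s c) - (p s : ℝ) * a s) := by
    intro s
    rw [← ha s]
    simp only [sub_sq, Finset.sum_add_distrib, Finset.sum_sub_distrib, Finset.sum_const,
      Finset.card_univ, Fintype.card_fin, nsmul_eq_mul, ← Finset.sum_mul, ← Finset.mul_sum]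
    ring
  have hz : ∑ s, 2 * l * ((∑ c, γ s c) - (p s : ℝ) * a s) = 0 := by
    rw [← Finset.mul_sum, Finset.sum_sub_distrib, hγ, sub_self, mul_zero]
  rw [hsbwCriterion_eq, hsbwCriterion_eq, hsbwCriterion_eq, Finset.sum_congr rfl fun s _ => key s,
    Finset.sum_add_distrib, hz, add_zero, Finset.sum_add_distrib]

/-- H-SBW solution without balance constraints.  For `ρ ∈ [0,1)`
and `p_s ≥ 1`, the unique minimizer of the H-SBW criterion over nonnegative weights
summing to one assigns within each state `s` the constant weight
`c_s / Σ_t p_t c_t` where `c_s = 1/((p_s − 1)ρ + 1)`. -/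
theorem stmt18 {m : ℕ} (hm : 0 < m) (p : Fin m → ℕ) (hp : ∀ s, 1 ≤ p s)
    (ρ : ℝ) (hρ0 : 0 ≤ ρ) (hρ1 : ρ < 1)
    (c : Fin m → ℝ) (hc : ∀ s, c s = 1 / (((p s : ℝ) - 1) * ρ + 1))
    (γstar : (s : Fin m) → Fin (p s) → ℝ)
    (hγstar : ∀ s cc, γstar s cc = c s / (∑ t, (p t : ℝ) * c t)) :
    ((∀ s cc, 0 ≤ γstar s cc) ∧ (∑ s, ∑ cc, γstar s cc) = 1) ∧
    (∀ γ : (s : Fin m) → Fin (p s) → ℝ,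
      (∀ s cc, 0 ≤ γ s cc) → (∑ s, ∑ cc, γ s cc) = 1 →
        hsbwCriterion ρ γstar ≤ hsbwCriterion ρ γ) ∧
    (∀ γ : (s : Fin m) → Fin (p s) → ℝ,
      (∀ s cc, 0 ≤ γ s cc) → (∑ s, ∑ cc, γ s cc) = 1 →
        hsbwCriterion ρ γ = hsbwCriterion ρ γstar → γ = γstar) := by
  have hm' : Nonempty (Fin m) := ⟨⟨0, hm⟩⟩
  have hp' : ∀ s, (1 : ℝ) ≤ p s := fun s => by exact_mod_cast hp s
  have hden : ∀ s, 0 < ((p s : ℝ) - 1) * ρ + 1 := fun s => by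
    have := mul_nonneg (sub_nonneg.mpr (hp' s)) hρ0
    linarith
  have hcpos : ∀ s, 0 < c s := fun s => by
    rw [hc]
    exact one_div_pos.mpr (hden s)
  set T := ∑ t, (p t : ℝ) * c t with hT
  have hTpos : 0 < T := Finset.sum_pos
    (fun s _ => mul_pos (by linarith [hp' s]) (hcpos s)) Finset.univ_nonempty
  have hstar : γstar = fun s _ => c s / T := by
    funext s cc
    exact hγstar s cc
  have htot : ∑ s, (p s : ℝ) * (c s / T) = 1 := by
    simp only [← mul_div_assoc, ← Finset.sum_div]
    exact div_self hTpos.ne'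
  have hgrad : ∀ s, (((p s : ℝ) - 1) * ρ + 1) * (c s / T) = 1 / T := fun s => by
    rw [hc s, ← mul_div_assoc, mul_one_div_cancel (hden s).ne']
  have hsplit : ∀ γ : (s : Fin m) → Fin (p s) → ℝ, (∑ s, ∑ cc, γ s cc) = 1 →
      hsbwCriterion ρ γ = hsbwCriterion ρ γstar
        + hsbwCriterion ρ (fun s cc => γ s cc - c s / T) := by
    intro γ hγ
    rw [hstar]
    exact hsbwCriterion_eq_add ρ (1 / T) (fun s => c s / T) hgrad γ (hγ.trans htot.symm)
  refine ⟨⟨fun s cc => ?_, ?_⟩, fun γ _ hγ => ?_, fun γ _ hγ heq => ?_⟩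
  · rw [hγstar]
    exact (div_pos (hcpos s) hTpos).le
  · rw [hstar]
    simpa using htot
  · rw [hsplit γ hγ]
    exact le_add_of_nonneg_right (hsbwCriterion_nonneg hρ0 hρ1 _)
  · have h0 : hsbwCriterion ρ (fun s cc => γ s cc - c s / T) = 0 := by
      linarith [hsplit γ hγ]
    funext s cc
    rw [hγstar]
    exact sub_eq_zero.mp (eq_zero_of_hsbwCriterion_eq_zero hρ0 hρ1 _ h0 s cc)
end
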